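/- For a pure bipartite state |ψ⟩ = Σ_{n≥1} μ_n |nn⟩ with Schmidt coefficients μ_n ≥ 0, the generalized robustness of entanglement equals (Σ_{n≥1} μ_n)². In particular it is finite if and only if the Schmidt coefficients are summable. -/

import Mathlib

noncomputable section
open scoped ENNReal ComplexOrder
open Filter

variable {H : Type} [NormedAddCommGroup H] [InnerProductSpace ℂ H] [CompleteSpace H]

local notation "⟪" x ", " y "⟫" => @inner ℂ _ _ x y

/-- Bounded operators on `H`. -/
abbrev Op (H : Type) [NormedAddCommGroup H] [InnerProductSpace ℂ H] : Type := H →L[ℂ] H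

/-- The rank-one projector `|ψ⟩⟨ψ|`. -/
def projv (ψ : H) : Op H := (innerSL ℂ ψ).smulRight ψ

/-- The trace of an operator with respect to a Hilbert basis. -/
def trB {ι : Type} (e : HilbertBasis ι ℂ H) (T : Op H) : ℂ := ∑' n, ⟪e n, T (e n)⟫

/-- A density operator: positive, trace-class (summable diagonal), unit trace. -/
def IsDensity {ι : Type} (e : HilbertBasis ι ℂ H) (ρ : Op H) : Prop :=
  ρ.IsPositive ∧ Summable (fun n => (⟪e n, ρ (e n)⟫).re) ∧ trB e ρ = 1

/-- The trace norm `Tr |T| = Tr √(T†T)`. -/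
def traceNorm {ι : Type} (e : HilbertBasis ι ℂ H) (T : Op H) : ℝ :=
  ∑' n, (⟪e n, (CFC.sqrt (ContinuousLinearMap.adjoint T ∘L T)) (e n)⟫).re

/-- Sequential closure of a set of operators in the trace norm. -/
def tnClosure {ι : Type} (e : HilbertBasis ι ℂ H) (S : Set (Op H)) : Set (Op H) :=
  {T | ∃ u : ℕ → Op H, (∀ k, u k ∈ S) ∧
    Tendsto (fun k => traceNorm e (u k - T)) atTop (nhds 0)}

/-- The generalized robustness `R_F(ρ) = inf {1 + λ | (ρ + λτ)/(1+λ) ∈ F, τ a density operator}`. -/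
def Robustness {ι : Type} (e : HilbertBasis ι ℂ H) (F : Set (Op H)) (ρ : Op H) : ℝ≥0∞ :=
  sInf {r : ℝ≥0∞ | ∃ lam : ℝ, 0 ≤ lam ∧ ∃ τ : Op H, IsDensity e τ ∧
    ((1 + lam)⁻¹ : ℝ) • (ρ + lam • τ) ∈ F ∧ r = ENNReal.ofReal (1 + lam)}

/-- A product vector with respect to the product basis `e : HilbertBasis (ℕ × ℕ)`. -/
def IsProductVec (e : HilbertBasis (ℕ × ℕ) ℂ H) (ψ : H) : Prop :=
  ∃ f g : ℕ → ℂ, ψ = ∑' q : ℕ × ℕ, (f q.1 * g q.2) • e q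

/-- The separable states: trace-norm closed convex hull of pure product state projectors. -/
def SepStates (e : HilbertBasis (ℕ × ℕ) ℂ H) : Set (Op H) :=
  tnClosure e (convexHull ℝ
    {T : Op H | ∃ ψ : H, ‖ψ‖ = 1 ∧ IsProductVec e ψ ∧ T = projv ψ})

/-!
The trace norm is dual to the operator norm, `‖T‖₁ = sup {|Tr (W† T)| : ‖W‖ ≤ 1}`.

*Lower bound.* Let `φ = ∑_{n<N} |nn⟩`. By Cauchy–Schwarz `|⟨φ, f ⊗ g⟩| ≤ ‖f ⊗ g‖`, so `⟨φ, σ φ⟩ ≤ 1`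
for every separable `σ`. If `ρ + λτ = (1 + λ)σ` with `ρ = |ψ⟩⟨ψ|`, then
`(∑_{n<N} μₙ)² = ⟨φ, ρ φ⟩ ≤ 1 + λ`; let `N → ∞`.

*Upper bound.* Average the projectors onto the product vectors
`(∑ₖ √μₖ ω^{xₖ} |k⟩) ⊗ (∑ₗ √μₗ ω^{-xₗ} |l⟩)`, of squared norm `(∑ₙ μₙ)²`, over independent uniform
phases. The only terms that survive are the coherent part `|ψ⟩⟨ψ|` and the diagonal noise
`∑_{k≠l} μₖ μₗ |kl⟩⟨kl|`, whose trace is `(∑ₙ μₙ)² - ∑ₙ μₙ² = (∑ₙ μₙ)² - 1`. This is done for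
finitely many levels at a time, followed by a limit in trace norm.
-/

variable {E : Type} [NormedAddCommGroup E] [InnerProductSpace ℂ E]

section TraceNorm

variable {ι κ : Type}

/-- `TraceNormLE e T c` says that `T` is trace class with trace norm at most `c`, through the
duality `‖T‖₁ = sup {|Tr (W† T)| : ‖W‖ ≤ 1}`. Bounding the partial sums of the diagonal of `W† T`
avoids presupposing any summability, and makes the triangle inequality immediate. -/
def TraceNormLE (e : HilbertBasis ι ℂ E) (T : Op E) (c : ℝ) : Prop :=
  ∀ W : Op E, ‖W‖ ≤ 1 → ∀ s : Finset ι, ∑ i ∈ s, ‖⟪W (e i), T (e i)⟫‖ ≤ c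

namespace TraceNormLE

section

variable {e : HilbertBasis ι ℂ E} {S T : Op E} {b c : ℝ}

lemma add (hS : TraceNormLE e S b) (hT : TraceNormLE e T c) : TraceNormLE e (S + T) (b + c) := by
  intro W hW s
  calc ∑ i ∈ s, ‖⟪W (e i), (S + T) (e i)⟫‖
      ≤ ∑ i ∈ s, (‖⟪W (e i), S (e i)⟫‖ + ‖⟪W (e i), T (e i)⟫‖) := by
        gcongr
        rw [add_apply, inner_add_right]
        exact norm_add_le _ _
    _ ≤ b + c := by
        rw [Finset.sum_add_distrib]
        exact add_le_add (hS W hW s) (hT W hW s)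

lemma smul (hT : TraceNormLE e T c) (a : ℝ) : TraceNormLE e (a • T) (|a| * c) := by
  intro W hW s
  simp only [smul_apply, inner_smul_right_eq_smul, norm_smul, Real.norm_eq_abs, ← Finset.mul_sum]
  exact mul_le_mul_of_nonneg_left (hT W hW s) (abs_nonneg a)

lemma neg (hT : TraceNormLE e T c) : TraceNormLE e (-T) c := by
  simpa using hT.smul (-1)

lemma sub (hS : TraceNormLE e S b) (hT : TraceNormLE e T c) : TraceNormLE e (S - T) (b + c) := by
  simpa [sub_eq_add_neg] using hS.add hT.neg

lemma of_hasSum {A : κ → Op E} {a : κ → ℝ} (hA : ∀ k, TraceNormLE e (A k) (a k))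
    (hT : ∀ x y, HasSum (fun k => ⟪x, A k y⟫) ⟪x, T y⟫) (hc : HasSum a c) :
    TraceNormLE e T c := by
  intro W hW s
  have hlim : Tendsto (fun F : Finset κ => ∑ i ∈ s, ‖∑ k ∈ F, ⟪W (e i), A k (e i)⟫‖) atTop
      (nhds (∑ i ∈ s, ‖⟪W (e i), T (e i)⟫‖)) :=
    tendsto_finsetSum s fun i _ => Tendsto.norm (hT (W (e i)) (e i))
  refine le_of_tendsto_of_tendsto' hlim hc fun F => ?_
  calc ∑ i ∈ s, ‖∑ k ∈ F, ⟪W (e i), A k (e i)⟫‖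
      ≤ ∑ i ∈ s, ∑ k ∈ F, ‖⟪W (e i), A k (e i)⟫‖ := by gcongr; exact norm_sum_le _ _
    _ = ∑ k ∈ F, ∑ i ∈ s, ‖⟪W (e i), A k (e i)⟫‖ := Finset.sum_comm
    _ ≤ ∑ k ∈ F, a k := Finset.sum_le_sum fun k _ => hA k W hW s

lemma convex_setOf : Convex ℝ {T : Op E | TraceNormLE e T c} := by
  intro S hS T hT a b ha hb hab
  have h := (hS.smul a).add (hT.smul b)
  rwa [abs_of_nonneg ha, abs_of_nonneg hb, ← add_mul, hab, one_mul] at h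

end

variable {e : HilbertBasis ι ℂ H} {T : Op H} {c : ℝ}

lemma rankOne (x y : H) : TraceNormLE e (InnerProductSpace.rankOne ℂ x y) (‖x‖ * ‖y‖) := by
  intro W hW s
  have bessel (z : H) : √(∑ i ∈ s, ‖⟪e i, z⟫‖ ^ 2) ≤ ‖z‖ :=
    Real.sqrt_le_iff.2 ⟨norm_nonneg z, e.orthonormal.sum_inner_products_le z⟩
  calc ∑ i ∈ s, ‖⟪W (e i), InnerProductSpace.rankOne ℂ x y (e i)⟫‖
      = ∑ i ∈ s, ‖⟪e i, W.adjoint x⟫‖ * ‖⟪e i, y⟫‖ := by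
        simp only [InnerProductSpace.rankOne_apply, inner_smul_right, norm_mul,
          ContinuousLinearMap.adjoint_inner_right, norm_inner_symm y, mul_comm]
    _ ≤ ‖W.adjoint x‖ * ‖y‖ :=
        (Real.sum_mul_le_sqrt_mul_sqrt s _ _).trans (by gcongr <;> exact bessel _)
    _ ≤ ‖x‖ * ‖y‖ := by
        gcongr
        have hW' : ‖W.adjoint‖ ≤ 1 := by rwa [LinearIsometryEquiv.norm_map]
        simpa only [one_mul] using W.adjoint.le_of_opNorm_le hW' x

-- For unit vectors, test against `W = |y⟩⟨x|`, for which `Tr (W† T) = ⟨y, T x⟩`.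
lemma norm_le (hT : TraceNormLE e T c) : ‖T‖ ≤ c := by
  have hc : 0 ≤ c := by simpa using hT 0 (by simp) ∅
  refine ContinuousLinearMap.opNorm_le_of_re_inner_le hc fun x y hx hy => ?_
  have hW : ‖InnerProductSpace.rankOne ℂ y x‖ ≤ 1 := by simp [hx, hy]
  have hsum : HasSum (fun i => ⟪T (e i), InnerProductSpace.rankOne ℂ y x (e i)⟫) ⟪T x, y⟫ := by
    simpa [inner_smul_right, ContinuousLinearMap.adjoint_inner_right, mul_comm] using
      e.hasSum_inner_mul_inner x (T.adjoint y)
  calc (⟪T x, y⟫).re ≤ ‖⟪T x, y⟫‖ := Complex.re_le_norm _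
    _ ≤ c := le_of_tendsto hsum.norm <| Eventually.of_forall fun s =>
        (norm_sum_le _ _).trans <| by
          simpa only [norm_inner_symm] using hT _ hW s

end TraceNormLE

variable {e : HilbertBasis ι ℂ H}

lemma inner_eq_inner_sqrt {P : Op H} (hP : P.IsPositive) (x y : H) :
    ⟪x, P y⟫ = ⟪CFC.sqrt P x, CFC.sqrt P y⟫ := by
  have hS : (CFC.sqrt P).IsPositive :=
    (ContinuousLinearMap.nonneg_iff_isPositive _).1 (CFC.sqrt_nonneg P)
  rw [hS.inner_left_eq_inner_right, ← mul_apply_eq_comp,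
    CFC.sqrt_mul_sqrt_self P ((ContinuousLinearMap.nonneg_iff_isPositive P).2 hP)]

-- With `S = √P`, this is the decomposition `P = ∑ᵢ |S eᵢ⟩⟨S eᵢ|`, where `‖S eᵢ‖² = ⟨eᵢ, P eᵢ⟩`.
lemma TraceNormLE.of_isPositive {P : Op H} {c : ℝ} (hP : P.IsPositive)
    (hc : HasSum (fun i => (⟪e i, P (e i)⟫).re) c) : TraceNormLE e P c := by
  have hdiag (i : ι) : (⟪e i, P (e i)⟫).re = ‖CFC.sqrt P (e i)‖ * ‖CFC.sqrt P (e i)‖ := by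
    rw [inner_eq_inner_sqrt hP]
    exact inner_self_eq_norm_mul_norm (𝕜 := ℂ) _
  have hS : (CFC.sqrt P).IsPositive :=
    (ContinuousLinearMap.nonneg_iff_isPositive _).1 (CFC.sqrt_nonneg P)
  refine .of_hasSum (fun i => .rankOne (CFC.sqrt P (e i)) (CFC.sqrt P (e i))) (fun x y => ?_)
    (by simpa only [hdiag] using hc)
  rw [inner_eq_inner_sqrt hP]
  simpa [hS.inner_left_eq_inner_right, inner_smul_right, mul_comm] using
    e.hasSum_inner_mul_inner (CFC.sqrt P x) (CFC.sqrt P y)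

-- A regularization of `x⁻¹`, needed because a partial isometry `w` with `a = w |a|` may fail to lie
-- in the algebra.
lemma exists_continuous_approx_inv {ε : ℝ} (hε : 0 < ε) : ∃ f : ℝ → ℝ, Continuous f ∧
    (∀ x, |f x * x| ≤ 1) ∧ ∀ x, |x - f x * x * x| ≤ ε := by
  have hpos (x : ℝ) : 0 < x ^ 2 + ε ^ 2 := by positivity
  refine ⟨fun x => x / (x ^ 2 + ε ^ 2), ?_, fun x => ?_, fun x => ?_⟩
  · exact continuous_id.div (by fun_prop) fun x => (hpos x).ne'
  · rw [div_mul_eq_mul_div, abs_div, abs_of_pos (hpos x), div_le_one (hpos x), abs_mul_self]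
    nlinarith
  · have hsub : x - x / (x ^ 2 + ε ^ 2) * x * x = ε * (ε * x) / (x ^ 2 + ε ^ 2) := by
      have := (hpos x).ne'
      field_simp
      ring
    rw [hsub, abs_div, abs_of_pos (hpos x), div_le_iff₀ (hpos x), abs_mul, abs_of_pos hε]
    gcongr
    rw [abs_le]
    constructor <;> nlinarith [sq_nonneg (x + ε), sq_nonneg (x - ε)]

lemma exists_norm_abs_sub_star_mul_le {A : Type*} [CStarAlgebra A] [PartialOrder A]
    [StarOrderedRing A] (a : A) {ε : ℝ} (hε : 0 < ε) :
    ∃ w : A, ‖w‖ ≤ 1 ∧ ‖CFC.abs a - star w * a‖ ≤ ε := by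
  obtain ⟨f, hf, hf_le, hf_sub_le⟩ := exists_continuous_approx_inv hε
  have hg : IsSelfAdjoint (cfc f (CFC.abs a)) := cfc_predicate f _
  have hcomm : Commute (cfc f (CFC.abs a)) (CFC.abs a) := Commute.cfc_real rfl f
  have hmul : cfc f (CFC.abs a) * CFC.abs a = cfc (fun x => f x * x) (CFC.abs a) := by
    rw [cfc_mul f (fun x => x) (CFC.abs a) hf.continuousOn continuousOn_id, cfc_id' ℝ (CFC.abs a)]
  have hmul_mul : cfc f (CFC.abs a) * CFC.abs a * CFC.abs a =
      cfc (fun x => f x * x * x) (CFC.abs a) := by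
    rw [hmul, cfc_mul (fun x => f x * x) (fun x => x) (CFC.abs a)
      (hf.mul continuous_id).continuousOn continuousOn_id, cfc_id' ℝ (CFC.abs a)]
  have hstar : star (a * cfc f (CFC.abs a)) * a = cfc f (CFC.abs a) * CFC.abs a * CFC.abs a := by
    rw [star_mul, hg.star_eq, mul_assoc, ← CFC.abs_mul_abs, ← mul_assoc]
  refine ⟨a * cfc f (CFC.abs a), ?_, ?_⟩
  · have hw : star (a * cfc f (CFC.abs a)) * (a * cfc f (CFC.abs a)) =
        cfc f (CFC.abs a) * CFC.abs a * (cfc f (CFC.abs a) * CFC.abs a) := by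
      rw [← mul_assoc, hstar, mul_assoc, ← hcomm.eq]
    have hnorm : ‖cfc f (CFC.abs a) * CFC.abs a‖ ≤ 1 := by
      rw [hmul]
      exact norm_cfc_le zero_le_one fun x _ => hf_le x
    rw [← sq_le_one_iff₀ (norm_nonneg _), sq, ← CStarRing.norm_star_mul_self, hw]
    exact (norm_mul_le _ _).trans (mul_le_one₀ hnorm (norm_nonneg _) hnorm)
  · have hsub : CFC.abs a - star (a * cfc f (CFC.abs a)) * a =
        cfc (fun x => x - f x * x * x) (CFC.abs a) := by
      rw [hstar, hmul_mul, cfc_sub (fun x => x) (fun x => f x * x * x) (CFC.abs a) continuousOn_id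
        ((hf.mul continuous_id).mul continuous_id).continuousOn, cfc_id' ℝ (CFC.abs a)]
    rw [hsub]
    exact norm_cfc_le hε.le fun x _ => hf_sub_le x

lemma re_inner_abs_nonneg (T : Op H) (x : H) : 0 ≤ (⟪x, CFC.abs T x⟫).re :=
  ((ContinuousLinearMap.nonneg_iff_isPositive _).1 (CFC.abs_nonneg T)).re_inner_nonneg_right x

namespace TraceNormLE

variable {T : Op H} {c : ℝ}

lemma sum_inner_abs_le (hT : TraceNormLE e T c) (s : Finset ι) :
    ∑ i ∈ s, (⟪e i, CFC.abs T (e i)⟫).re ≤ c := by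
  refine le_of_forall_pos_le_add fun δ hδ => ?_
  obtain ⟨W, hW, hWT⟩ := exists_norm_abs_sub_star_mul_le T (ε := δ / (s.card + 1)) (by positivity)
  have hterm (i : ι) : (⟪e i, CFC.abs T (e i)⟫).re ≤ ‖⟪W (e i), T (e i)⟫‖ + δ / (s.card + 1) := by
    have hsplit : ⟪e i, CFC.abs T (e i)⟫ =
        ⟪W (e i), T (e i)⟫ + ⟪e i, (CFC.abs T - star W * T) (e i)⟫ := by
      rw [sub_apply, inner_sub_right, mul_apply_eq_comp, ContinuousLinearMap.star_eq_adjoint,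
        ContinuousLinearMap.adjoint_inner_right, add_sub_cancel]
    calc (⟪e i, CFC.abs T (e i)⟫).re ≤ ‖⟪e i, CFC.abs T (e i)⟫‖ := Complex.re_le_norm _
      _ ≤ ‖⟪W (e i), T (e i)⟫‖ + ‖⟪e i, (CFC.abs T - star W * T) (e i)⟫‖ :=
          hsplit ▸ norm_add_le _ _
      _ ≤ ‖⟪W (e i), T (e i)⟫‖ + δ / (s.card + 1) := by
          gcongr
          have hei : ‖e i‖ = 1 := e.orthonormal.norm_eq_one i
          calc _ ≤ ‖e i‖ * ‖(CFC.abs T - star W * T) (e i)‖ := norm_inner_le_norm _ _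
            _ ≤ _ := by simpa [hei] using ContinuousLinearMap.le_of_opNorm_le _ hWT (e i)
  calc ∑ i ∈ s, (⟪e i, CFC.abs T (e i)⟫).re
      ≤ ∑ i ∈ s, (‖⟪W (e i), T (e i)⟫‖ + δ / (s.card + 1)) := Finset.sum_le_sum fun i _ => hterm i
    _ = ∑ i ∈ s, ‖⟪W (e i), T (e i)⟫‖ + s.card / (s.card + 1) * δ := by
        rw [Finset.sum_add_distrib, Finset.sum_const, nsmul_eq_mul]
        ring
    _ ≤ c + 1 * δ := by
        gcongr
        · exact hT W hW s
        · exact (div_le_one (by positivity)).2 (by linarith)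
    _ = c + δ := by rw [one_mul]

lemma summable_inner_abs (hT : TraceNormLE e T c) :
    Summable fun i => (⟪e i, CFC.abs T (e i)⟫).re :=
  summable_of_sum_le (fun i => re_inner_abs_nonneg T (e i)) hT.sum_inner_abs_le

lemma traceNorm_le (hT : TraceNormLE e T c) : traceNorm e T ≤ c :=
  hT.summable_inner_abs.tsum_le_of_sum_le hT.sum_inner_abs_le

lemma norm_le_traceNorm (hT : TraceNormLE e T c) : ‖T‖ ≤ traceNorm e T :=
  CFC.norm_abs (a := T) ▸ (of_isPositive
    ((ContinuousLinearMap.nonneg_iff_isPositive _).1 (CFC.abs_nonneg T))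
    hT.summable_inner_abs.hasSum).norm_le

end TraceNormLE

lemma traceNorm_nonneg (e : HilbertBasis ι ℂ H) (T : Op H) : 0 ≤ traceNorm e T :=
  tsum_nonneg fun i => re_inner_abs_nonneg T (e i)

lemma mem_closure_of_mem_tnClosure {S : Set (Op H)} {T : Op H} {c : ℝ}
    (hS : ∀ A ∈ S, ∃ a, TraceNormLE e A a) (hT : TraceNormLE e T c) (h : T ∈ tnClosure e S) :
    T ∈ closure S := by
  obtain ⟨u, huS, hu⟩ := h
  have hle (k : ℕ) : ‖u k - T‖ ≤ traceNorm e (u k - T) := by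
    obtain ⟨a, ha⟩ := hS _ (huS k)
    exact (ha.sub hT).norm_le_traceNorm
  have hlim : Tendsto u atTop (nhds T) := tendsto_iff_norm_sub_tendsto_zero.2 <|
    squeeze_zero (fun k => norm_nonneg _) hle hu
  exact mem_closure_of_tendsto hlim (Eventually.of_forall huS)

lemma mem_tnClosure_of_eventually {S : Set (Op H)} {T : Op H} {u : ℕ → Op H} {c : ℕ → ℝ}
    (hu : ∀ᶠ k in atTop, u k ∈ S) (hc : ∀ k, TraceNormLE e (u k - T) (c k))
    (hc0 : Tendsto c atTop (nhds 0)) : T ∈ tnClosure e S := by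
  obtain ⟨N, hN⟩ := eventually_atTop.1 hu
  refine ⟨fun k => u (k + N), fun k => hN _ (Nat.le_add_left N k), ?_⟩
  exact squeeze_zero (fun k => traceNorm_nonneg e _) (fun k => (hc (k + N)).traceNorm_le)
    ((tendsto_add_atTop_iff_nat N).2 hc0)

lemma smul_mem_tnClosure {S : Set (Op H)} {A : ℕ → Op H} {T : Op H} {r d : ℕ → ℝ} {r₀ b : ℝ}
    (hA : ∀ᶠ k in atTop, r k • A k ∈ S) (hr : Tendsto r atTop (nhds r₀))
    (hAT : ∀ k, TraceNormLE e (A k - T) (d k)) (hd : Tendsto d atTop (nhds 0))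
    (hT : TraceNormLE e T b) : r₀ • T ∈ tnClosure e S := by
  refine mem_tnClosure_of_eventually (c := fun k => |r k| * d k + |r k - r₀| * b) hA
    (fun k => ?_) ?_
  · have hsplit : r k • A k - r₀ • T = r k • (A k - T) + (r k - r₀) • T := by module
    exact hsplit ▸ ((hAT k).smul _).add (hT.smul _)
  · simpa using (hr.abs.mul hd).add ((hr.sub_const r₀).abs.mul_const b)

end TraceNorm

section RankOneProjector

variable {ι : Type} {e : HilbertBasis ι ℂ E}

lemma projv_eq_rankOne (ψ : E) : projv ψ = InnerProductSpace.rankOne ℂ ψ ψ := rfl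

lemma inner_projv (ψ x y : E) : ⟪x, projv ψ y⟫ = ⟪x, ψ⟫ * ⟪ψ, y⟫ := by
  simp [projv, mul_comm]

lemma re_inner_projv_self (ψ x : E) : (⟪x, projv ψ x⟫).re = ‖⟪x, ψ⟫‖ ^ 2 := by
  rw [inner_projv, ← inner_conj_symm ψ x, RCLike.mul_conj]
  norm_cast

lemma projv_isPositive (ψ : E) : (projv ψ).IsPositive :=
  InnerProductSpace.isPositive_rankOne_self ψ

lemma projv_smul (c : ℝ) (x : E) : projv ((c : ℂ) • x) = c ^ 2 • projv x := by
  simp only [projv_eq_rankOne, map_smulₛₗ, smul_apply, smul_smul,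
    RCLike.real_smul_eq_coe_smul (K := ℂ)]
  simp [sq]

lemma projv_sum_smul {κ : Type*} (s : Finset κ) (a : κ → ℂ) (v : κ → E) :
    projv (∑ p ∈ s, a p • v p) = ∑ p ∈ s, ∑ q ∈ s,
      (a p * (starRingEnd ℂ) (a q)) • InnerProductSpace.rankOne ℂ (v p) (v q) := by
  rw [Finset.sum_comm]
  simp [projv_eq_rankOne, smul_smul]

lemma hasSum_inner_projv (e : HilbertBasis ι ℂ E) (ψ : E) :
    HasSum (fun i => (⟪e i, projv ψ (e i)⟫).re) (‖ψ‖ ^ 2) := by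
  have h := Complex.hasSum_re (e.hasSum_inner_mul_inner ψ ψ)
  have hnorm : (⟪ψ, ψ⟫).re = ‖ψ‖ ^ 2 := inner_self_eq_norm_sq (𝕜 := ℂ) ψ
  simpa only [inner_projv, mul_comm, hnorm] using h

lemma isPositive_smul {P : Op E} (hP : P.IsPositive) {a : ℝ} (ha : 0 ≤ a) :
    (a • P).IsPositive := by
  rw [RCLike.real_smul_eq_coe_smul (K := ℂ)]
  exact hP.smul_of_nonneg (RCLike.ofReal_nonneg.2 ha)

lemma isDensity_iff {ρ : Op E} :
    IsDensity e ρ ↔ ρ.IsPositive ∧ HasSum (fun i => (⟪e i, ρ (e i)⟫).re) 1 := by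
  refine and_congr_right fun hρ => ?_
  have hre (i : ι) : ⟪e i, ρ (e i)⟫ = ((⟪e i, ρ (e i)⟫).re : ℂ) :=
    Complex.ext rfl (Complex.nonneg_iff.1 (hρ.inner_nonneg_right (e i))).2.symm
  have htr : trB e ρ = ((∑' i, (⟪e i, ρ (e i)⟫).re : ℝ) : ℂ) := by
    rw [Complex.ofReal_tsum]
    exact tsum_congr hre
  rw [htr, Complex.ofReal_eq_one]
  exact ⟨fun h => h.2 ▸ h.1.hasSum, fun h => ⟨h.summable, h.tsum_eq⟩⟩

lemma isDensity_projv {ψ : E} (hψ : ‖ψ‖ = 1) : IsDensity e (projv ψ) :=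
  isDensity_iff.2 ⟨projv_isPositive ψ, by simpa [hψ] using hasSum_inner_projv e ψ⟩

end RankOneProjector

section Density

variable {ι : Type} {e : HilbertBasis ι ℂ H}

lemma IsDensity.traceNormLE {ρ : Op H} (hρ : IsDensity e ρ) : TraceNormLE e ρ 1 :=
  .of_isPositive hρ.1 (isDensity_iff.1 hρ).2

lemma exists_isDensity_smul_eq [Nonempty ι] {P : Op H} {t : ℝ} (hP : P.IsPositive)
    (ht : HasSum (fun i => (⟪e i, P (e i)⟫).re) t) : ∃ τ, IsDensity e τ ∧ t • τ = P := by
  have ht0 : 0 ≤ t := ht.nonneg fun i => hP.re_inner_nonneg_right (e i)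
  rcases ht0.eq_or_lt with rfl | htpos
  · have hP0 : P = 0 := norm_le_zero_iff.1 (TraceNormLE.of_isPositive hP ht).norm_le
    obtain ⟨i⟩ := ‹Nonempty ι›
    exact ⟨projv (e i), isDensity_projv (e.orthonormal.norm_eq_one i), by rw [hP0, zero_smul]⟩
  · refine ⟨t⁻¹ • P, isDensity_iff.2 ⟨isPositive_smul hP (by positivity), ?_⟩,
      smul_inv_smul₀ htpos.ne' P⟩
    simpa [inner_smul_right_eq_smul, htpos.ne'] using ht.mul_left t⁻¹

lemma ofReal_inner_le_robustness {F : Set (Op H)} {ρ : Op H} {φ : H} {c : ℝ}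
    (hF : ∀ σ ∈ F, ∀ b, TraceNormLE e σ b → (⟪φ, σ φ⟫).re ≤ 1) (hρ : TraceNormLE e ρ c) :
    ENNReal.ofReal (⟪φ, ρ φ⟫).re ≤ Robustness e F ρ := by
  refine le_sInf ?_
  rintro _ ⟨t, ht, τ, hτ, hmem, rfl⟩
  have hle := hF _ hmem _ ((hρ.add (hτ.traceNormLE.smul t)).smul _)
  have hτ0 : 0 ≤ (⟪φ, τ φ⟫).re := hτ.1.re_inner_nonneg_right φ
  simp only [smul_apply, add_apply, inner_smul_right_eq_smul, inner_add_right, Complex.smul_re,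
    Complex.add_re, smul_eq_mul, inv_mul_le_iff₀ (by positivity : 0 < 1 + t)] at hle
  exact ENNReal.ofReal_le_ofReal (by linarith [mul_nonneg ht hτ0])

lemma robustness_le_ofReal [Nonempty ι] {F : Set (Op H)} {ρ P : Op H} {t : ℝ} (hP : P.IsPositive)
    (ht : HasSum (fun i => (⟪e i, P (e i)⟫).re) t) (hF : (1 + t)⁻¹ • (ρ + P) ∈ F) :
    Robustness e F ρ ≤ ENNReal.ofReal (1 + t) := by
  obtain ⟨τ, hτ, rfl⟩ := exists_isDensity_smul_eq hP ht
  exact sInf_le ⟨t, ht.nonneg fun i => hP.re_inner_nonneg_right (e i), τ, hτ, hF, rfl⟩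

end Density

section ProductVector

variable {e : HilbertBasis (ℕ × ℕ) ℂ E}

/-- The generators of the separable states: `SepStates e` unfolds to
`tnClosure e (convexHull ℝ (PureProductStates e))`. -/
def PureProductStates (e : HilbertBasis (ℕ × ℕ) ℂ E) : Set (Op E) :=
  {T : Op E | ∃ ψ : E, ‖ψ‖ = 1 ∧ IsProductVec e ψ ∧ T = projv ψ}

lemma inner_eq_of_hasSum {ι : Type*} {v : ι → E} (hv : Orthonormal ℂ v) {c : ι → ℂ} {x : E}
    (hx : HasSum (fun i => c i • v i) x) (i : ι) : ⟪v i, x⟫ = c i := by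
  have hi := hasSum_single (f := fun j => ⟪v i, c j • v j⟫) i fun j hj => by
    rw [inner_smul_right, hv.inner_eq_zero hj.symm, mul_zero]
  calc ⟪v i, x⟫ = ⟪v i, c i • v i⟫ := ((innerSL ℂ (v i)).hasSum hx).unique hi
    _ = c i := by simp [hv.norm_eq_one i]

lemma IsProductVec.exists_inner_eq {ψ : E} (hψ : IsProductVec e ψ) :
    ∃ f g : ℕ → ℂ, ∀ n m, ⟪e (n, m), ψ⟫ = f n * g m := by
  obtain ⟨f, g, rfl⟩ := hψ
  by_cases hs : Summable fun q : ℕ × ℕ => (f q.1 * g q.2) • e q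
  · exact ⟨f, g, fun n m => inner_eq_of_hasSum e.orthonormal hs.hasSum (n, m)⟩
  · exact ⟨0, 0, by simp [tsum_eq_zero_of_not_summable hs]⟩

lemma IsProductVec.norm_inner_sum_diag_le {ψ : E} (hψ : IsProductVec e ψ) (s : Finset ℕ) :
    ‖⟪∑ n ∈ s, e (n, n), ψ⟫‖ ≤ ‖ψ‖ := by
  obtain ⟨f, g, hfg⟩ := hψ.exists_inner_eq
  calc ‖⟪∑ n ∈ s, e (n, n), ψ⟫‖ ≤ ∑ n ∈ s, ‖f n‖ * ‖g n‖ := by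
        simp only [sum_inner, hfg, ← norm_mul]
        exact norm_sum_le _ _
    _ ≤ √(∑ n ∈ s, ‖f n‖ ^ 2) * √(∑ m ∈ s, ‖g m‖ ^ 2) := Real.sum_mul_le_sqrt_mul_sqrt s _ _
    _ = √(∑ q ∈ s ×ˢ s, ‖⟪e q, ψ⟫‖ ^ 2) := by
        rw [← Real.sqrt_mul (by positivity), Finset.sum_mul_sum, Finset.sum_product]
        simp only [hfg, norm_mul, mul_pow]
    _ ≤ ‖ψ‖ := Real.sqrt_le_iff.2
        ⟨norm_nonneg ψ, e.orthonormal.sum_inner_products_le ψ⟩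

/-- The vector `∑ₙ μₙ |nn⟩` with Schmidt coefficients `μ`; it is `0` when `μ` is not square
summable. -/
def schmidtVec (e : HilbertBasis (ℕ × ℕ) ℂ E) (μ : ℕ → ℝ) : E :=
  ∑' n : ℕ, ((μ n : ℝ) : ℂ) • e (n, n)

lemma orthonormal_diag (e : HilbertBasis (ℕ × ℕ) ℂ E) : Orthonormal ℂ fun n => e (n, n) :=
  e.orthonormal.comp (fun n => (n, n)) fun _ _ h => congrArg Prod.fst h

end ProductVector

section LowerBound

variable {e : HilbertBasis (ℕ × ℕ) ℂ H}

lemma summable_smul_of_orthonormal {ι : Type*} {v : ι → H} (hv : Orthonormal ℂ v) {c : ι → ℂ}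
    (hc : Summable fun i => ‖c i‖ ^ 2) : Summable fun i => c i • v i := by
  simpa using (hv.orthogonalFamily.summable_iff_norm_sq_summable c).2 hc

lemma convexHull_pureProductStates_subset_traceNormLE :
    convexHull ℝ (PureProductStates e) ⊆ {A | TraceNormLE e A 1} := by
  refine convexHull_min ?_ TraceNormLE.convex_setOf
  rintro _ ⟨ψ, hψ, -, rfl⟩
  exact (isDensity_projv hψ).traceNormLE

lemma re_inner_le_one_of_mem_sepStates {φ : H} {σ : Op H} {c : ℝ}
    (hφ : ∀ ψ, ‖ψ‖ = 1 → IsProductVec e ψ → ‖⟪φ, ψ⟫‖ ≤ 1) (hσ : σ ∈ SepStates e)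
    (hc : TraceNormLE e σ c) : (⟪φ, σ φ⟫).re ≤ 1 := by
  have hclosed : IsClosed {A : Op H | (⟪φ, A φ⟫).re ≤ 1} :=
    isClosed_le (by fun_prop) continuous_const
  have hconvex : Convex ℝ {A : Op H | (⟪φ, A φ⟫).re ≤ 1} :=
    convex_halfSpace_le (𝕜 := ℝ) ⟨by simp, by simp [inner_smul_right_eq_smul]⟩ 1
  have hpure : PureProductStates e ⊆ {A | (⟪φ, A φ⟫).re ≤ 1} := by
    rintro _ ⟨ψ, hψ, hprod, rfl⟩
    simpa [re_inner_projv_self] using hφ ψ hψ hprod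
  exact closure_minimal (convexHull_min hpure hconvex) hclosed <|
    mem_closure_of_mem_tnClosure
      (fun A hA => ⟨1, convexHull_pureProductStates_subset_traceNormLE hA⟩) hc hσ

lemma hasSum_schmidtVec (e : HilbertBasis (ℕ × ℕ) ℂ H) {μ : ℕ → ℝ}
    (hsq : Summable fun n => μ n ^ 2) :
    HasSum (fun n => (μ n : ℂ) • e (n, n)) (schmidtVec e μ) :=
  (summable_smul_of_orthonormal (orthonormal_diag e) (by simpa using hsq)).hasSum

theorem sq_tsum_le_robustness (e : HilbertBasis (ℕ × ℕ) ℂ H) {μ : ℕ → ℝ} (hμ : ∀ n, 0 ≤ μ n)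
    (hsq : Summable fun n => μ n ^ 2) :
    (∑' n, ENNReal.ofReal (μ n)) ^ 2 ≤ Robustness e (SepStates e) (projv (schmidtVec e μ)) := by
  have hfin (s : Finset ℕ) : (∑ n ∈ s, ENNReal.ofReal (μ n)) ^ 2 ≤
      Robustness e (SepStates e) (projv (schmidtVec e μ)) := by
    have hinner : ⟪∑ n ∈ s, e (n, n), schmidtVec e μ⟫ = ((∑ n ∈ s, μ n : ℝ) : ℂ) := by
      rw [sum_inner, Complex.ofReal_sum]
      exact Finset.sum_congr rfl fun n _ =>
        inner_eq_of_hasSum (orthonormal_diag e) (hasSum_schmidtVec e hsq) n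
    calc (∑ n ∈ s, ENNReal.ofReal (μ n)) ^ 2
        = ENNReal.ofReal (⟪∑ n ∈ s, e (n, n), projv (schmidtVec e μ) (∑ n ∈ s, e (n, n))⟫).re := by
          rw [re_inner_projv_self, hinner, Complex.norm_real, Real.norm_eq_abs, sq_abs,
            ENNReal.ofReal_pow (Finset.sum_nonneg fun n _ => hμ n),
            ENNReal.ofReal_sum_of_nonneg fun n _ => hμ n]
      _ ≤ _ := ofReal_inner_le_robustness (fun σ hσ b hb => re_inner_le_one_of_mem_sepStates
          (fun ψ hψ hprod => hψ ▸ hprod.norm_inner_sum_diag_le s) hσ hb)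
          (TraceNormLE.rankOne (schmidtVec e μ) (schmidtVec e μ))
  exact le_of_tendsto' ((ENNReal.continuous_pow 2).tendsto _ |>.comp
    ENNReal.summable.hasSum) hfin

end LowerBound

section PhaseTwirl

variable {κ : Type} [Fintype κ]

lemma isProductVec_sum (e : HilbertBasis (ℕ × ℕ) ℂ E) (j : κ ↪ ℕ) (f g : κ → ℂ) :
    IsProductVec e (∑ p : κ × κ, (f p.1 * g p.2) • e (j p.1, j p.2)) := by
  refine ⟨Function.extend j f 0, Function.extend j g 0, ?_⟩
  have hsupp : Function.support (fun q : ℕ × ℕ =>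
      (Function.extend j f 0 q.1 * Function.extend j g 0 q.2) • e q) ⊆
      Set.range (Prod.map j j) := by
    rintro ⟨n, m⟩ hnm
    have hn : n ∈ Set.range j := by
      by_contra hn
      simp [Function.extend_apply' _ _ _ hn] at hnm
    have hm : m ∈ Set.range j := by
      by_contra hm
      simp [Function.extend_apply' _ _ _ hm] at hnm
    rw [Set.range_prodMap]
    exact ⟨hn, hm⟩
  rw [← (j.injective.prodMap j.injective).tsum_eq hsupp, tsum_fintype]
  simp [j.injective.extend_apply, Prod.map]

lemma IsProductVec.smul {e : HilbertBasis (ℕ × ℕ) ℂ E} {ψ : E} (hψ : IsProductVec e ψ) (c : ℂ) :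
    IsProductVec e (c • ψ) := by
  obtain ⟨f, g, rfl⟩ := hψ
  refine ⟨c • f, g, ?_⟩
  rw [← tsum_const_smul'']
  simp [smul_smul, mul_assoc]

/-- The product vector `(∑ₖ √aₖ ω^xₖ |k⟩) ⊗ (∑ₗ √aₗ ω^(-xₗ) |l⟩)`, with `ω` a primitive cube root
of unity and the index set `κ` embedded in `ℕ` by `j`. -/
def phaseVec (e : HilbertBasis (ℕ × ℕ) ℂ E) (j : κ ↪ ℕ) (a : κ → ℝ) (x : κ → ZMod 3) : E :=
  ∑ p : κ × κ, ZMod.stdAddChar (x p.1 - x p.2) • ((√(a p.1 * a p.2) : ℝ) : ℂ) • e (j p.1, j p.2)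

variable (e : HilbertBasis (ℕ × ℕ) ℂ E) (j : κ ↪ ℕ) {a : κ → ℝ}

lemma isProductVec_phaseVec (ha : ∀ k, 0 ≤ a k) (x : κ → ZMod 3) :
    IsProductVec e (phaseVec e j a x) := by
  convert isProductVec_sum e j (fun k => ZMod.stdAddChar (x k) * (√(a k) : ℝ))
    (fun k => ZMod.stdAddChar (-x k) * (√(a k) : ℝ)) using 1
  refine Finset.sum_congr rfl fun p _ => ?_
  rw [smul_smul, Real.sqrt_mul (ha p.1), Complex.ofReal_mul, sub_eq_add_neg,
    AddChar.map_add_eq_mul, mul_mul_mul_comm]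

lemma norm_phaseVec (ha : ∀ k, 0 ≤ a k) (x : κ → ZMod 3) : ‖phaseVec e j a x‖ = ∑ k, a k := by
  have horth : Orthonormal ℂ fun p : κ × κ => e (j p.1, j p.2) :=
    e.orthonormal.comp (Prod.map j j) (j.injective.prodMap j.injective)
  have hsq : ‖phaseVec e j a x‖ ^ 2 = (∑ k, a k) ^ 2 := by
    have hinner := horth.inner_sum
      (fun p => ZMod.stdAddChar (x p.1 - x p.2) * ((√(a p.1 * a p.2) : ℝ) : ℂ))
      (fun p => ZMod.stdAddChar (x p.1 - x p.2) * ((√(a p.1 * a p.2) : ℝ) : ℂ)) Finset.univ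
    simp only [mul_smul, Complex.conj_mul', norm_mul, AddChar.norm_apply, one_mul,
      Complex.norm_real, Real.norm_eq_abs, sq_abs, ← Complex.ofReal_pow] at hinner
    rw [← Complex.ofReal_inj, sq (∑ k, a k), Finset.sum_mul_sum, ← Fintype.sum_prod_type']
    simp only [Real.sq_sqrt (mul_nonneg (ha _) (ha _))] at hinner
    simpa [phaseVec, inner_self_eq_norm_sq_to_K] using hinner
  exact (sq_eq_sq₀ (norm_nonneg _) (Finset.sum_nonneg fun k _ => ha k)).1 hsq

lemma smul_projv_phaseVec_mem (ha : ∀ k, 0 ≤ a k) (ha0 : ∑ k, a k ≠ 0) (x : κ → ZMod 3) :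
    ((∑ k, a k) ^ 2)⁻¹ • projv (phaseVec e j a x) ∈ PureProductStates e := by
  refine ⟨((∑ k, a k)⁻¹ : ℝ) • phaseVec e j a x, ?_, ?_, ?_⟩
  · rw [norm_smul, norm_phaseVec e j ha, norm_inv, Real.norm_of_nonneg
      (Finset.sum_nonneg fun k _ => ha k), inv_mul_cancel₀ ha0]
  · rw [RCLike.real_smul_eq_coe_smul (K := ℂ)]
    exact (isProductVec_phaseVec e j ha x).smul _
  · rw [RCLike.real_smul_eq_coe_smul (K := ℂ), ← inv_pow]
    exact (projv_smul _ _).symm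

variable [DecidableEq κ]

-- Modulo `3` the coefficients `±1` and `±2` do not vanish.
lemma forall_apply_sub_apply_eq_iff {κ : Type*} {a b c d : κ} :
    (∀ x : κ → ZMod 3, x a - x b = x c - x d) ↔ (a = b ∧ c = d) ∨ (a = c ∧ b = d) := by
  classical
  constructor
  · intro h
    have ha := h (Pi.single a 1)
    have hb := h (Pi.single b 1)
    have hc := h (Pi.single c 1)
    simp only [Pi.single_apply] at ha hb hc
    grind [show (1 : ZMod 3) + 1 ≠ 0 by decide]
  · rintro (⟨rfl, rfl⟩ | ⟨rfl, rfl⟩) x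
    · simp
    · rfl

lemma sum_stdAddChar_mul_conj (p q : κ × κ) :
    ∑ x : κ → ZMod 3, ZMod.stdAddChar (x p.1 - x p.2) *
        (starRingEnd ℂ) (ZMod.stdAddChar (x q.1 - x q.2)) =
      if (p.1 = p.2 ∧ q.1 = q.2) ∨ p = q then 3 ^ Fintype.card κ else 0 := by
  let π (k : κ) : (κ → ZMod 3) →+ ZMod 3 := Pi.evalAddMonoidHom _ k
  let χ : AddChar (κ → ZMod 3) ℂ :=
    ZMod.stdAddChar.compAddMonoidHom (π p.1 - π p.2 - (π q.1 - π q.2))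
  have hχ : χ = 0 ↔ (p.1 = p.2 ∧ q.1 = q.2) ∨ p = q := by
    rw [Prod.ext_iff, ← forall_apply_sub_apply_eq_iff, AddChar.eq_zero_iff]
    refine forall_congr' fun x => ?_
    rw [← sub_eq_zero (b := x q.1 - x q.2), ← ZMod.injective_stdAddChar.eq_iff,
      AddChar.map_zero_eq_one]
    rfl
  calc _ = ∑ x, χ x := Finset.sum_congr rfl fun x _ => by
        rw [← AddChar.map_neg_eq_conj, ← AddChar.map_add_eq_mul, ← sub_eq_add_neg]
        rfl
    _ = _ := by simp [AddChar.sum_eq_ite, hχ]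

-- The phases are trivial on the diagonal, and averaging over `x` kills every other cross term.
lemma sum_projv_phase (v : κ × κ → E) :
    ∑ x : κ → ZMod 3, projv (∑ p : κ × κ, ZMod.stdAddChar (x p.1 - x p.2) • v p) =
      (3 ^ Fintype.card κ : ℝ) • (projv (∑ k, v (k, k)) +
        ∑ p : κ × κ, if p.1 = p.2 then 0 else projv (v p)) := by
  let R (p q : κ × κ) : Op E := InnerProductSpace.rankOne ℂ (v p) (v q)
  have hdiag : projv (∑ k, v (k, k)) =
      ∑ p, ∑ q, if p.1 = p.2 ∧ q.1 = q.2 then R p q else 0 := by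
    have h := projv_sum_smul Finset.univ (fun _ => 1) fun k => v (k, k)
    simp only [one_smul, map_one, mul_one] at h
    simp [h, R, Fintype.sum_prod_type, ite_and]
  have hoff : (∑ p : κ × κ, if p.1 = p.2 then 0 else projv (v p)) =
      ∑ p, ∑ q, if p.1 ≠ p.2 ∧ p = q then R p q else 0 := by
    refine Finset.sum_congr rfl fun p _ => ?_
    by_cases hp : p.1 = p.2
    · simp [hp]
    · simp [hp, R, projv_eq_rankOne]
  calc ∑ x : κ → ZMod 3, projv (∑ p : κ × κ, ZMod.stdAddChar (x p.1 - x p.2) • v p)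
      = ∑ p, ∑ q, (∑ x : κ → ZMod 3, ZMod.stdAddChar (x p.1 - x p.2) *
          (starRingEnd ℂ) (ZMod.stdAddChar (x q.1 - x q.2))) • R p q := by
        simp only [projv_sum_smul, Finset.sum_smul]
        rw [Finset.sum_comm]
        exact Finset.sum_congr rfl fun p _ => Finset.sum_comm
    _ = _ := by
        rw [hdiag, hoff, ← Finset.sum_add_distrib, Finset.smul_sum]
        refine Finset.sum_congr rfl fun p _ => ?_
        rw [← Finset.sum_add_distrib, Finset.smul_sum]
        refine Finset.sum_congr rfl fun q _ => ?_
        rw [sum_stdAddChar_mul_conj, RCLike.real_smul_eq_coe_smul (K := ℂ)]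
        rcases eq_or_ne p q with rfl | hpq
        · by_cases hp : p.1 = p.2 <;> simp [hp]
        · simp [hpq, ite_smul]

/-- The weights `aₖ aₗ` on the pairs `k ≠ l`, of the diagonal noise which makes a pure state with
Schmidt coefficients `a` separable. -/
def offDiag {κ : Type} [DecidableEq κ] (a : κ → ℝ) (p : κ × κ) : ℝ :=
  if p.1 = p.2 then 0 else a p.1 * a p.2

lemma sum_projv_phaseVec (ha : ∀ k, 0 ≤ a k) :
    ∑ x, projv (phaseVec e j a x) = (3 ^ Fintype.card κ : ℝ) •
      (projv (∑ k, (a k : ℂ) • e (j k, j k)) +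
        ∑ p : κ × κ, offDiag a p • projv (e (j p.1, j p.2))) := by
  simp only [phaseVec]
  rw [sum_projv_phase fun p : κ × κ => ((√(a p.1 * a p.2) : ℝ) : ℂ) • e (j p.1, j p.2)]
  congr 2
  · simp [Real.sqrt_mul_self, ha]
  · refine Finset.sum_congr rfl fun p _ => ?_
    rw [offDiag, projv_smul, Real.sq_sqrt (mul_nonneg (ha _) (ha _)), ite_smul, zero_smul]

lemma smul_add_offDiag_mem_convexHull (ha : ∀ k, 0 ≤ a k) (ha0 : ∑ k, a k ≠ 0) :
    ((∑ k, a k) ^ 2)⁻¹ • (projv (∑ k, (a k : ℂ) • e (j k, j k)) +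
        ∑ p : κ × κ, offDiag a p • projv (e (j p.1, j p.2))) ∈
      convexHull ℝ (PureProductStates e) := by
  have hmean := (convex_convexHull ℝ (PureProductStates e)).sum_mem
    (t := (Finset.univ : Finset (κ → ZMod 3))) (w := fun _ => (3 ^ Fintype.card κ : ℝ)⁻¹)
    (fun _ _ => by positivity) (by simp)
    fun x _ => subset_convexHull ℝ _ (smul_projv_phaseVec_mem e j ha ha0 x)
  rw [← Finset.smul_sum, ← Finset.smul_sum, sum_projv_phaseVec e j ha, smul_comm,
    inv_smul_smul₀ (by positivity)] at hmean
  exact hmean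

lemma smul_add_offDiag_mem_convexHull_finset {μ : ℕ → ℝ} (hμ : ∀ n, 0 ≤ μ n)
    {s : Finset ℕ} (hs : ∑ n ∈ s, μ n ≠ 0) :
    ((∑ n ∈ s, μ n) ^ 2)⁻¹ • (projv (∑ n ∈ s, (μ n : ℂ) • e (n, n)) +
        ∑ q ∈ s ×ˢ s, offDiag μ q • projv (e q)) ∈ convexHull ℝ (PureProductStates e) := by
  have h := smul_add_offDiag_mem_convexHull e (Function.Embedding.subtype (· ∈ s))
    (a := fun k => μ k) (fun k => hμ k) (by rwa [Finset.sum_coe_sort s μ])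
  have hoff : ∑ p : s × s, offDiag (fun k : s => μ k) p • projv (e (p.1, p.2)) =
      ∑ q ∈ s ×ˢ s, offDiag μ q • projv (e q) := by
    rw [Fintype.sum_prod_type, Finset.sum_product, ← Finset.sum_coe_sort s]
    refine Finset.sum_congr rfl fun k _ => ?_
    rw [← Finset.sum_coe_sort s]
    simp only [offDiag, Subtype.val_inj]
  simp only [Function.Embedding.subtype_apply] at h
  rwa [hoff, Finset.sum_coe_sort s μ, Finset.sum_coe_sort s fun n => (μ n : ℂ) • e (n, n)] at h

end PhaseTwirl

section DiagonalOperator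

variable {ι : Type}

/-- The diagonal operator `∑ᵢ cᵢ |eᵢ⟩⟨eᵢ|`, the series converging in operator norm when `c` is
summable. -/
def diagOp (e : HilbertBasis ι ℂ H) (c : ι → ℝ) : Op H :=
  ∑' i, c i • projv (e i)

variable (e : HilbertBasis ι ℂ H) {c : ι → ℝ} {C : ℝ}

lemma hasSum_diagOp (hc : Summable c) : HasSum (fun i => c i • projv (e i)) (diagOp e c) := by
  refine Summable.hasSum (.of_norm_bounded hc.abs fun i => ?_)
  have hi := (isDensity_projv (e := e) (e.orthonormal.norm_eq_one i)).traceNormLE.norm_le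
  rw [norm_smul, Real.norm_eq_abs]
  exact mul_le_of_le_one_right (abs_nonneg _) hi

lemma diagOp_isPositive (hc0 : ∀ i, 0 ≤ c i) : (diagOp e c).IsPositive := by
  rw [← ContinuousLinearMap.nonneg_iff_isPositive]
  exact tsum_nonneg fun i => (ContinuousLinearMap.nonneg_iff_isPositive _).2
    (isPositive_smul (projv_isPositive _) (hc0 i))

lemma inner_diagOp_self (hc : Summable c) (i : ι) : ⟪e i, diagOp e c (e i)⟫ = c i := by
  have hsingle : HasSum (fun k => ⟪e i, (c k • projv (e k)) (e i)⟫)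
      ⟪e i, (c i • projv (e i)) (e i)⟫ := by
    refine hasSum_single i fun k hk => ?_
    rw [smul_apply, inner_smul_right_eq_smul, inner_projv, e.orthonormal.inner_eq_zero hk.symm,
      zero_mul, smul_zero]
  have heval := ((innerSL ℂ (e i)).comp (ContinuousLinearMap.apply ℂ H (e i))).hasSum
    (hasSum_diagOp e hc)
  calc ⟪e i, diagOp e c (e i)⟫ = ⟪e i, (c i • projv (e i)) (e i)⟫ := heval.unique hsingle
    _ = c i := by
      simp [inner_smul_right_eq_smul, inner_projv, e.orthonormal.norm_eq_one i]

lemma hasSum_inner_diagOp (hc : HasSum c C) :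
    HasSum (fun i => (⟪e i, diagOp e c (e i)⟫).re) C := by
  simpa only [inner_diagOp_self e hc.summable, Complex.ofReal_re] using hc

lemma traceNormLE_sum_sub_diagOp (hc0 : ∀ i, 0 ≤ c i) (hc : HasSum c C) (s : Finset ι) :
    TraceNormLE e (∑ i ∈ s, c i • projv (e i) - diagOp e c) (C - ∑ i ∈ s, c i) := by
  have hD := (s.hasSum_compl_iff (f := fun i => c i • projv (e i))
    (a := diagOp e c - ∑ i ∈ s, c i • projv (e i))).2
    (by simpa using hasSum_diagOp e hc.summable)
  have hC := (s.hasSum_compl_iff (f := c) (a := C - ∑ i ∈ s, c i)).2 (by simpa using hc)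
  rw [← neg_sub (diagOp e c)]
  refine (TraceNormLE.of_hasSum (A := fun i : {i // i ∉ s} => c i • projv (e i))
    (fun i => ?_) (fun x y => ?_) hC).neg
  · have hi := (isDensity_projv (e := e) (e.orthonormal.norm_eq_one i)).traceNormLE.smul (c i)
    rwa [mul_one, abs_of_nonneg (hc0 i)] at hi
  · exact ((innerSL ℂ x).comp (ContinuousLinearMap.apply ℂ H y)).hasSum hD

lemma traceNormLE_projv_sub_projv (x y : H) :
    TraceNormLE e (projv x - projv y) (‖x - y‖ * ‖x‖ + ‖y‖ * ‖x - y‖) := by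
  have hsplit : projv x - projv y =
      InnerProductSpace.rankOne ℂ (x - y) x + InnerProductSpace.rankOne ℂ y (x - y) := by
    simp [projv_eq_rankOne]
  exact hsplit ▸ (TraceNormLE.rankOne (x - y) x).add (.rankOne y (x - y))

end DiagonalOperator

section UpperBound

variable (e : HilbertBasis (ℕ × ℕ) ℂ H) {μ : ℕ → ℝ}

lemma offDiag_nonneg {κ : Type} [DecidableEq κ] {a : κ → ℝ} (ha : ∀ k, 0 ≤ a k) (p : κ × κ) :
    0 ≤ offDiag a p := by
  rw [offDiag]
  split_ifs
  exacts [le_rfl, mul_nonneg (ha _) (ha _)]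

lemma hasSum_offDiag {κ : Type} [DecidableEq κ] {a : κ → ℝ} {t : ℝ} (ha : ∀ k, 0 ≤ a k)
    (hs : Summable a) (hsq : HasSum (fun k => a k ^ 2) t) :
    HasSum (offDiag a) ((∑' k, a k) ^ 2 - t) := by
  have hprod : HasSum (fun p : κ × κ => a p.1 * a p.2) ((∑' k, a k) ^ 2) :=
    sq (∑' k, a k) ▸ hs.hasSum.mul hs.hasSum (hs.mul_of_nonneg hs ha ha)
  have hinj : Function.Injective fun k : κ => (k, k) := fun _ _ h => congrArg Prod.fst h
  have hdiag : HasSum (fun p : κ × κ => if p.1 = p.2 then a p.1 * a p.2 else 0) t := by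
    rw [← hinj.hasSum_iff]
    · simpa [Function.comp_def, ← sq] using hsq
    · rintro ⟨k, l⟩ hkl
      exact if_neg fun h => hkl ⟨k, by simpa using h⟩
  refine (hprod.sub hdiag).congr_fun fun p => ?_
  by_cases h : p.1 = p.2 <;> simp [offDiag, h]

lemma tendsto_range_product_range_atTop :
    Tendsto (fun N => Finset.range N ×ˢ Finset.range N) atTop atTop := by
  refine tendsto_atTop_finset_of_monotone (fun M N hMN => by gcongr) fun q => ?_
  exact ⟨max q.1 q.2 + 1, by simp⟩

lemma smul_schmidtVec_add_diagOp_mem_sepStates (hμ : ∀ n, 0 ≤ μ n) (hs : Summable μ)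
    (hsq : Summable fun n => μ n ^ 2) (h0 : ∑' n, μ n ≠ 0) :
    ((∑' n, μ n) ^ 2)⁻¹ • (projv (schmidtVec e μ) + diagOp e (offDiag μ)) ∈ SepStates e := by
  obtain ⟨C, hoff⟩ : Summable (offDiag μ) := ⟨_, hasSum_offDiag hμ hs hsq.hasSum⟩
  have hM := hs.hasSum.tendsto_sum_nat
  have hψ := (hasSum_schmidtVec e hsq).tendsto_sum_nat
  have hψ_sub := (hψ.sub_const (schmidtVec e μ)).norm
  have hbox := hoff.comp tendsto_range_product_range_atTop
  have hdist (N : ℕ) := (traceNormLE_projv_sub_projv e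
      (∑ n ∈ Finset.range N, (μ n : ℂ) • e (n, n)) (schmidtVec e μ)).add
    (traceNormLE_sum_sub_diagOp e (offDiag_nonneg hμ) hoff (Finset.range N ×ˢ Finset.range N))
  simp only [← add_sub_add_comm] at hdist
  refine smul_mem_tnClosure ?_ ((hM.pow 2).inv₀ (pow_ne_zero 2 h0)) hdist ?_
    ((TraceNormLE.rankOne _ _).add
      (.of_isPositive (diagOp_isPositive e (offDiag_nonneg hμ)) (hasSum_inner_diagOp e hoff)))
  · filter_upwards [hM.eventually_ne h0] with N hN
    exact smul_add_offDiag_mem_convexHull_finset e hμ hN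
  · simpa using ((hψ_sub.mul hψ.norm).add (hψ_sub.const_mul ‖schmidtVec e μ‖)).add
      (hbox.const_sub C)

lemma robustness_projv_schmidtVec_le (hμ : ∀ n, 0 ≤ μ n) (hs : Summable μ)
    (hsq : HasSum (fun n => μ n ^ 2) 1) :
    Robustness e (SepStates e) (projv (schmidtVec e μ)) ≤ ENNReal.ofReal ((∑' n, μ n) ^ 2) := by
  have h0 : ∑' n, μ n ≠ 0 := by
    intro h0
    have hμ0 : μ = 0 := (hasSum_zero_iff_of_nonneg hμ).1 (h0 ▸ hs.hasSum)
    simpa [hμ0] using hsq.tsum_eq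
  rw [← add_sub_cancel 1 ((∑' n, μ n) ^ 2)]
  refine robustness_le_ofReal (diagOp_isPositive e (offDiag_nonneg hμ))
    (hasSum_inner_diagOp e (hasSum_offDiag hμ hs hsq)) ?_
  rw [add_sub_cancel]
  exact smul_schmidtVec_add_diagOp_mem_sepStates e hμ hs hsq.summable h0

end UpperBound

/-- for a pure bipartite state `|ψ⟩ = ∑ₙ μₙ |nn⟩` with Schmidt coefficients
`μₙ ≥ 0`, the generalized robustness of entanglement equals `(∑ₙ μₙ)²` (computed in `ℝ≥0∞`,
so it is finite iff the Schmidt coefficients are summable). -/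
theorem robustness_entanglement_pure (e : HilbertBasis (ℕ × ℕ) ℂ H)
    (μ : ℕ → ℝ) (hμ : ∀ n, 0 ≤ μ n) (hsq : Summable (fun n => μ n ^ 2))
    (hnorm : ∑' n : ℕ, μ n ^ 2 = 1) :
    Robustness e (SepStates e) (projv (∑' n : ℕ, ((μ n : ℝ) : ℂ) • e (n, n))) =
      (∑' n : ℕ, ENNReal.ofReal (μ n)) ^ 2 := by
  refine le_antisymm ?_ (sq_tsum_le_robustness e hμ hsq)
  by_cases hs : Summable μ
  · rw [← ENNReal.ofReal_tsum_of_nonneg hμ hs, ← ENNReal.ofReal_pow (tsum_nonneg hμ)]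
    exact robustness_projv_schmidtVec_le e hμ hs (hnorm ▸ hsq.hasSum)
  · have htop : ∑' n, ENNReal.ofReal (μ n) = ⊤ := by
      by_contra h
      exact hs (by simpa [hμ] using ENNReal.summable_toReal h)
    simp [htop]
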